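/- Let R be a ring, q a central invertible element of R, and n ≥ 2. Let z = (z_{ij})_{1≤i,j≤n} be a quantum matrix over R such that z_{11} is invertible in R, and let ξ_1, …, ξ_n ∈ R satisfy ξ_i² = 0 for all i and ξ_i ξ_j = q^{-1} ξ_j ξ_i for all i < j, with every ξ_k commuting with every z_{ij}. Set ξ'_1 = Σ_j z_{1j} ξ_j and, for i ≥ 2, t_i = −z_{i1} z_{11}^{-1}. Then t_i ξ'_1 = q ξ'_1 t_i for every i ≥ 2. -/

import Mathlib

/-- The relations `Rel_q` of the ring of quantum matrices `M_q(n)` over a ring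
`R`, for a (central) invertible element `q`. -/
def IsQuantumMatrix {R : Type*} [Ring R] (q : Rˣ) {m n : ℕ}
    (z : Fin m → Fin n → R) : Prop :=
  (∀ (i : Fin m) (k l : Fin n), k < l → z i l * z i k = (q : R) * (z i k * z i l)) ∧
  (∀ (i j : Fin m) (k : Fin n), i < j → z j k * z i k = (q : R) * (z i k * z j k)) ∧
  (∀ (i j : Fin m) (k l : Fin n), i < j → k < l → z i l * z j k = z j k * z i l) ∧
  (∀ (i j : Fin m) (k l : Fin n), i < j → k < l →
    z j l * z i k - z i k * z j l = ((q⁻¹ : Rˣ) - (q : R)) * (z i l * z j k))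

/-- The number of inversions (the length) of a permutation. -/
def inversions {n : ℕ} (σ : Equiv.Perm (Fin n)) : ℕ :=
  (Finset.univ.filter (fun x : Fin n × Fin n => x.1 < x.2 ∧ σ x.2 < σ x.1)).card

/-- The quantum determinant
`det_q(z) = Σ_{σ} (-q⁻¹)^{ℓ(σ)} z_{1σ(1)} z_{2σ(2)} ⋯ z_{nσ(n)}`,
with the (noncommutative) product taken in increasing row order. -/
def qdet {R : Type*} [Ring R] (q : Rˣ) {n : ℕ}
    (z : Fin n → Fin n → R) : R :=
  ∑ σ : Equiv.Perm (Fin n),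
    ((-q⁻¹ : Rˣ) : R) ^ inversions σ * (List.ofFn fun i => z i (σ i)).prod

/-!
That `a` and `b` `q`-commute, `a * b = q * (b * a)`, says that `a` semiconjugates `b` to `q * b`.
Fix rows `i < j` with `u = z i k` invertible. Inverting `u` turns the row relation into `u⁻¹`
semiconjugating each later entry `z i l` to `q * z i l`, and `z j k` commutes with `z i l` by the
secondary diagonal relation; for `l = k` the roles are exchanged: `u⁻¹` commutes with `z i k`, and
`z j k` contributes the factor `q`. Either way `z j k * u⁻¹` semiconjugates `z i l` to `q * z i l`,
and this passes to linear combinations of the `z i l` with coefficients commuting with it.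
-/

theorem semiconjBy_sum_right {ι S : Type*} [NonUnitalNonAssocSemiring S] (s : Finset ι) {a : S}
    {f g : ι → S} (h : ∀ i ∈ s, SemiconjBy a (f i) (g i)) :
    SemiconjBy a (∑ i ∈ s, f i) (∑ i ∈ s, g i) := by
  rw [SemiconjBy, Finset.mul_sum, Finset.sum_mul]
  exact Finset.sum_congr rfl h

theorem semiconjBy_invOf_left {M : Type*} [Monoid M] {u x y : M} [Invertible u]
    (h : SemiconjBy u x y) : SemiconjBy (⅟u) y x :=
  SemiconjBy.units_inv_symm_left (a := unitOfInvertible u) h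

namespace IsQuantumMatrix

variable {R : Type*} [Ring R] {q : Rˣ} {m n : ℕ} {z : Fin m → Fin n → R}
  {i j : Fin m} {k l : Fin n}

theorem semiconjBy_of_row_lt (hz : IsQuantumMatrix q z) (hij : i < j) (k : Fin n) :
    SemiconjBy (z j k) (z i k) (q * z i k) :=
  (hz.2.1 i j k hij).trans (mul_assoc _ _ _).symm

theorem commute_of_lt_of_lt (hz : IsQuantumMatrix q z) (hij : i < j) (hkl : k < l) :
    Commute (z j k) (z i l) :=
  (hz.2.2.1 i j k l hij hkl).symm

theorem semiconjBy_invOf_of_col_lt (hz : IsQuantumMatrix q z) (hkl : k < l)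
    [Invertible (z i k)] (hq : Commute (q : R) (z i k)) :
    SemiconjBy (⅟(z i k)) (z i l) (q * z i l) := by
  refine semiconjBy_invOf_left ?_
  calc z i k * (q * z i l) = q * (z i k * z i l) := hq.symm.left_comm _
    _ = z i l * z i k := (hz.1 i k l hkl).symm

theorem semiconjBy_mul_invOf (hz : IsQuantumMatrix q z) (hij : i < j) (hkl : k ≤ l)
    [Invertible (z i k)] (hqi : Commute (q : R) (z i k)) (hqj : Commute (q : R) (z j k)) :
    SemiconjBy (z j k * ⅟(z i k)) (z i l) (q * z i l) := by
  obtain rfl | hkl := hkl.eq_or_lt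
  · exact (hz.semiconjBy_of_row_lt hij k).mul_left (commute_invOf (z i k)).symm
  · have col_comm : Commute (z j k) (q * z i l) :=
      hqj.symm.mul_right (hz.commute_of_lt_of_lt hij hkl)
    exact col_comm.semiconjBy.mul_left (hz.semiconjBy_invOf_of_col_lt hkl hqi)

end IsQuantumMatrix

theorem t_xi_commutation_general {R : Type*} [Ring R] (q : Rˣ) {m n : ℕ}
    (z : Fin m → Fin (n + 1) → R) (hz : IsQuantumMatrix q z)
    (hq : ∀ r, Commute (q : R) (z r 0)) (ξ : Fin (n + 1) → R)
    (hξ : ∀ l r, Commute (ξ l) (z r 0)) {i j : Fin m} (hij : i < j) [Invertible (z i 0)] :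
    (-(z j 0 * ⅟(z i 0))) * (∑ l, z i l * ξ l) =
      (q : R) * ((∑ l, z i l * ξ l) * (-(z j 0 * ⅟(z i 0)))) := by
  have coeff_comm (l) : Commute (z j 0 * ⅟(z i 0)) (ξ l) :=
    (hξ l j).symm.mul_left (hξ l i).symm.invOf_left
  have term (l) : SemiconjBy (z j 0 * ⅟(z i 0)) (z i l * ξ l) (q * (z i l * ξ l)) := by
    rw [← mul_assoc]
    exact (hz.semiconjBy_mul_invOf hij (Fin.zero_le l) (hq i) (hq j)).mul_right (coeff_comm l)
  have sum_term := (semiconjBy_sum_right Finset.univ fun l _ => term l).neg_left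
  rwa [← Finset.mul_sum, SemiconjBy, mul_assoc] at sum_term

/-- If `z` is an `n × n` quantum matrix (`n ≥ 2`) with `z₁₁` invertible (with
two-sided inverse `w`) and `ξ₁, …, ξ_n` is a point of the quantum Grassmannian
plane commuting with all entries of `z`, then with `ξ'₁ = Σⱼ z₁ⱼ ξⱼ` and
`tᵢ = -zᵢ₁ z₁₁⁻¹` for `i ≥ 2` one has `tᵢ ξ'₁ = q ξ'₁ tᵢ`. -/
theorem t_xi_commutation {R : Type*} [Ring R] (q : Rˣ)
    (hqc : ∀ x : R, (q : R) * x = x * (q : R)) (n : ℕ)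
    (z : Fin (n + 2) → Fin (n + 2) → R) (hz : IsQuantumMatrix q z)
    (w : R) (hw : z 0 0 * w = 1) (hw' : w * z 0 0 = 1)
    (ξ : Fin (n + 2) → R)
    (hξsq : ∀ i, ξ i * ξ i = 0)
    (hξ : ∀ i j : Fin (n + 2), i < j → ξ i * ξ j = ((q⁻¹ : Rˣ) : R) * (ξ j * ξ i))
    (hcomm : ∀ (k i j : Fin (n + 2)), ξ k * z i j = z i j * ξ k) :
    ∀ i : Fin (n + 2), i ≠ 0 →
      (-(z i 0 * w)) * (∑ j, z 0 j * ξ j) =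
        (q : R) * ((∑ j, z 0 j * ξ j) * (-(z i 0 * w))) := by
  intro i hi
  let _ : Invertible (z 0 0) := ⟨w, hw', hw⟩
  exact t_xi_commutation_general q z hz (fun _ => hqc _) ξ (fun l r => hcomm l r 0)
    (Fin.pos_of_ne_zero hi)
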